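/- Let $f \in \mathbb{Z}[x_1, \dots, x_{d_1}, z_1, \dots, z_{d_2}]$ be a polynomial with integer coefficients and total degree at most $D$. Let $P \subseteq \mathbb{R}^{d_1} \times \mathbb{R}^{d_2}$ be a polytope, and let $\Delta$ be a positive integer such that for every $z \in \mathbb{Z}^{d_2}$ the scaled slice $\Delta P_z = \{\Delta x : (x,z) \in P\}$ is an integral polytope. Let $m = k\Delta$ where $k$ is an integer with $k \ge D \, d_1$. Then $f$ is constant on $P \cap (\mathbb{R}^{d_1} \times \mathbb{Z}^{d_2})$ if and only if $f$ is constant on $P \cap (\frac{1}{m}\mathbb{Z}^{d_1} \times \mathbb{Z}^{d_2})$. -/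

import Mathlib

/-- vanishing of all iterated differences of order `n` -/
def DiffZero {M : Type*} [AddCommMonoid M] : ℕ → (M → ℝ) → Prop
  | 0, F => ∀ x, F x = 0
  | n + 1, F => ∀ h, DiffZero n (fun x => F (x + h) - F x)

namespace DiffZero
variable {M : Type*} [AddCommMonoid M]

lemma zero (n : ℕ) : DiffZero n (fun _ : M => (0 : ℝ)) := by
  induction n with
  | zero => intro x; rfl
  | succ n ih => intro h; simpa using ih

lemma succ {n : ℕ} {F : M → ℝ} (hF : DiffZero n F) : DiffZero (n + 1) F := by
  induction n generalizing F with
  | zero => intro h x; simp [hF _]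
  | succ n ih => intro h; exact ih (hF h)

lemma mono {n m : ℕ} (hnm : n ≤ m) {F : M → ℝ} (hF : DiffZero n F) : DiffZero m F := by
  induction hnm with
  | refl => exact hF
  | step _ ih => exact ih.succ

lemma add {n : ℕ} {F G : M → ℝ} (hF : DiffZero n F) (hG : DiffZero n G) :
    DiffZero n (fun x => F x + G x) := by
  induction n generalizing F G with
  | zero => intro x; simp [hF x, hG x]
  | succ n ih =>
    intro h
    have := ih (hF h) (hG h)
    convert this using 2
    ring

lemma smul {n : ℕ} {F : M → ℝ} (c : ℝ) (hF : DiffZero n F) :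
    DiffZero n (fun x => c * F x) := by
  induction n generalizing F with
  | zero => intro x; simp [hF x]
  | succ n ih =>
    intro h
    have := ih (hF h)
    convert this using 2
    ring

lemma shift {n : ℕ} {F : M → ℝ} (c : M) (hF : DiffZero n F) :
    DiffZero n (fun x => F (x + c)) := by
  induction n generalizing F with
  | zero => intro x; simp [hF _]
  | succ n ih =>
    intro h
    have := ih (hF h)
    convert this using 4
    abel

lemma sum {α : Type*} (s : Finset α) {n : ℕ} {F : α → M → ℝ} (hF : ∀ i ∈ s, DiffZero n (F i)) :
    DiffZero n (fun x => ∑ i ∈ s, F i x) := by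
  classical
  induction s using Finset.induction_on with
  | empty => simpa using zero n
  | insert a s ha ih =>
    simp only [Finset.sum_insert ha]
    exact (hF a (by simp)).add (ih fun i hi => hF i (by simp [hi]))

lemma mul_aff {n : ℕ} {F : M → ℝ} (g l : M → ℝ) (hg : ∀ x h, g (x + h) = g x + l h)
    (hF : DiffZero n F) : DiffZero (n + 1) (fun x => g x * F x) := by
  induction n generalizing F with
  | zero => intro h x; simp [hF _]
  | succ n ih =>
    intro h
    have := (ih (hF h)).add ((hF.shift h).smul (l h))
    convert this using 2
    simp only [hg]; ring

lemma pow_mul_aff {n : ℕ} {F : M → ℝ} (g l : M → ℝ) (hg : ∀ x h, g (x + h) = g x + l h)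
    (hF : DiffZero n F) (e : ℕ) : DiffZero (e + n) (fun x => g x ^ e * F x) := by
  induction e with
  | zero => simpa using hF
  | succ e ih =>
    have := ih.mul_aff g l hg
    rw [show e + 1 + n = e + n + 1 by omega]
    convert this using 2
    ring

lemma prod_aff {σ : Type*} (s : Finset σ) (d : σ → ℕ) (g l : σ → M → ℝ)
    (hg : ∀ i x h, g i (x + h) = g i x + l i h) :
    DiffZero (∑ i ∈ s, d i + 1) (fun x => ∏ i ∈ s, g i x ^ d i) := by
  classical
  induction s using Finset.induction_on with
  | empty => intro h x; simp
  | insert a s ha ih =>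
    simp only [Finset.prod_insert ha, Finset.sum_insert ha]
    have := ih.pow_mul_aff (g a) (l a) (hg a) (d a)
    rwa [← add_assoc] at this

lemma aeval {σ : Type*} (f : MvPolynomial σ ℤ) (D : ℕ) (hD : f.totalDegree ≤ D)
    (g l : σ → M → ℝ) (hg : ∀ i x h, g i (x + h) = g i x + l i h) :
    DiffZero (D + 1) (fun x => MvPolynomial.aeval (fun i => g i x) f) := by
  simp only [MvPolynomial.aeval_def, MvPolynomial.eval₂_eq]
  apply sum
  intro d hd
  apply smul
  refine mono ?_ (prod_aff d.support d g l hg)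
  have := MvPolynomial.le_totalDegree hd
  simp only [Finsupp.sum] at this
  omega

lemma eq_zero {ι : Type*} [Fintype ι] {n : ℕ} {F : (ι → ℕ) → ℝ} (hF : DiffZero n F)
    (h0 : ∀ a, ∑ i, a i < n → F a = 0) : ∀ a, F a = 0 := by
  classical
  induction n generalizing F with
  | zero => exact hF
  | succ n ih =>
    have key : ∀ i a, F (a + Pi.single i 1) = F a := by
      intro i a
      have := ih (hF (Pi.single i 1)) (by
        intro a ha
        rw [h0 _ (by simp [Finset.sum_add_distrib]; omega), h0 a (by omega), sub_zero]) a
      linarith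
    intro a
    induction hs : ∑ i, a i generalizing a with
    | zero => exact h0 a (by omega)
    | succ N ihN =>
      obtain ⟨i, -, hi⟩ : ∃ i ∈ Finset.univ, a i ≠ 0 := by
        apply Finset.exists_ne_zero_of_sum_ne_zero; omega
      have e : a = (a - Pi.single i 1) + Pi.single i 1 := by
        ext j
        by_cases h : j = i
        · subst h; simp; omega
        · simp [h]
      rw [e, key]
      apply ihN
      have h2 := congrArg (fun b : ι → ℕ => ∑ j, b j) e
      simp only [Pi.add_apply, Finset.sum_add_distrib, Finset.sum_pi_single', Finset.mem_univ,
        if_true] at h2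
      rw [hs] at h2
      have h3 : ∑ j, (Pi.single i 1 : ι → ℕ) j = 1 := by simp
      omega

end DiffZero

/-- A polynomial that vanishes (is `c`) on a principal lattice is constant. -/
lemma lattice_const {σ ι : Type*} [Fintype ι] (f : MvPolynomial σ ℤ) (D k : ℕ)
    (hD : f.totalDegree ≤ D) (hk : D ≤ k) (A : σ → ℝ) (B : ι → σ → ℝ) (c : ℝ)
    (h : ∀ a : ι → ℕ, ∑ i, a i ≤ k →
      MvPolynomial.aeval (fun s => A s + ∑ i, (a i : ℝ) * B i s) f = c) (t : ι → ℝ) :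
    MvPolynomial.aeval (fun s => A s + ∑ i, t i * B i s) f = c := by
  classical
  have h1 : DiffZero (D + 1) (fun a : ι → ℕ =>
      MvPolynomial.aeval (fun s => A s + ∑ i, (a i : ℝ) * B i s) f - c) := by
    have e1 := DiffZero.aeval f D hD (fun s (a : ι → ℕ) => A s + ∑ i, (a i : ℝ) * B i s)
      (fun s a => ∑ i, (a i : ℝ) * B i s) (by
        intro s x y
        simp [add_mul, Finset.sum_add_distrib, add_assoc])
    have e2 : DiffZero (D + 1) (fun _ : ι → ℕ => -c) :=
      DiffZero.mono (n := 1) (by omega) (by intro h x; simp)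
    simpa [sub_eq_add_neg] using e1.add e2
  have h2 := h1.eq_zero (fun a ha => by rw [h a (by omega), sub_self])
  let q : MvPolynomial ι ℝ :=
    MvPolynomial.aeval (fun s => MvPolynomial.C (A s) +
      ∑ i, MvPolynomial.X i * MvPolynomial.C (B i s)) f
  have hq : ∀ t : ι → ℝ, MvPolynomial.eval t q =
      MvPolynomial.aeval (fun s => A s + ∑ i, t i * B i s) f := by
    intro t
    have := MvPolynomial.map_aeval (fun s => MvPolynomial.C (A s) +
      ∑ i, MvPolynomial.X i * MvPolynomial.C (B i s)) (MvPolynomial.eval t) f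
    simp only [q]
    rw [this, MvPolynomial.aeval_def]
    simp only [MvPolynomial.coe_eval₂Hom]
    congr 1
    · exact RingHom.ext_int _ _
    · ext s; simp
  have hqc : q = MvPolynomial.C c := by
    apply MvPolynomial.funext_set (fun _ => Set.range (Nat.cast : ℕ → ℝ))
    · intro _; exact Set.infinite_range_of_injective Nat.cast_injective
    · intro x hx
      choose a ha using fun i => hx i (Set.mem_univ i)
      obtain rfl : (fun i => (a i : ℝ)) = x := funext ha
      rw [hq, MvPolynomial.eval_C]
      linarith [h2 a]
  rw [← hq, hqc, MvPolynomial.eval_C]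

/-- mixed-integer constancy test. Let `f` be an integer polynomial
in variables `(x, z)` of total degree at most `D`, `P` a polytope, and `Δ` a
positive integer such that every scaled slice `Δ·P_z` (for integer `z`) is an
integral polytope. If `m = kΔ` with `k ≥ D·d₁`, then `f` is constant on
`P ∩ (ℝ^{d₁} × ℤ^{d₂})` iff it is constant on `P ∩ ((1/m)ℤ^{d₁} × ℤ^{d₂})`. -/
theorem stmt_7 (d1 d2 D : ℕ) (f : MvPolynomial (Fin d1 ⊕ Fin d2) ℤ)
    (hdeg : f.totalDegree ≤ D)
    (P : Set ((Fin d1 → ℝ) × (Fin d2 → ℝ)))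
    (hpoly : ∃ W : Finset ((Fin d1 → ℝ) × (Fin d2 → ℝ)), P = convexHull ℝ (W : Set _))
    (Δ : ℕ) (hΔ : 0 < Δ)
    (hslice : ∀ z : Fin d2 → ℤ, ∃ V : Finset (Fin d1 → ℤ),
      {y : Fin d1 → ℝ | ∃ x : Fin d1 → ℝ,
          (x, fun i => (z i : ℝ)) ∈ P ∧ y = fun i => (Δ : ℝ) * x i}
        = convexHull ℝ ((fun v : Fin d1 → ℤ => fun i => (v i : ℝ)) '' (V : Set (Fin d1 → ℤ))))
    (k m : ℕ) (hk : D * d1 ≤ k) (hm : m = k * Δ) :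
    (∀ xz ∈ P, (∀ i, ∃ n : ℤ, xz.2 i = (n : ℝ)) →
     ∀ yw ∈ P, (∀ i, ∃ n : ℤ, yw.2 i = (n : ℝ)) →
       MvPolynomial.aeval (Sum.elim xz.1 xz.2) f
         = MvPolynomial.aeval (Sum.elim yw.1 yw.2) f) ↔
    (∀ xz ∈ P, (∀ i, ∃ n : ℤ, xz.1 i = (n : ℝ) / (m : ℝ)) → (∀ i, ∃ n : ℤ, xz.2 i = (n : ℝ)) →
     ∀ yw ∈ P, (∀ i, ∃ n : ℤ, yw.1 i = (n : ℝ) / (m : ℝ)) → (∀ i, ∃ n : ℤ, yw.2 i = (n : ℝ)) →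
       MvPolynomial.aeval (Sum.elim xz.1 xz.2) f
         = MvPolynomial.aeval (Sum.elim yw.1 yw.2) f) := by
  constructor
  · intro h xz hxz _ hx2 yw hyw _ hy2
    exact h xz hxz hx2 yw hyw hy2
  intro h
  by_cases hd1 : d1 = 0
  · subst hd1
    intro xz hxz hx2 yw hyw hy2
    exact h xz hxz (fun i => i.elim0) hx2 yw hyw (fun i => i.elim0) hy2
  by_cases hD0 : D = 0
  · have : f.totalDegree = 0 := by omega
    rw [MvPolynomial.totalDegree_eq_zero_iff_eq_C] at this
    intro xz _ _ yw _ _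
    rw [this]; simp
  have hDk : D ≤ k := le_trans (Nat.le_mul_of_pos_right D (Nat.pos_of_ne_zero hd1)) hk
  have hk0 : (k : ℝ) ≠ 0 := by
    have : k ≠ 0 := by omega
    exact_mod_cast this
  have hk0' : (0 : ℝ) < k := by positivity
  have hΔ0 : (Δ : ℝ) ≠ 0 := by positivity
  -- each point has the same value as some lattice point
  have main : ∀ xz ∈ P, (∀ i, ∃ n : ℤ, xz.2 i = (n : ℝ)) →
      ∃ u ∈ P, (∀ i, ∃ n : ℤ, u.1 i = (n : ℝ) / (m : ℝ)) ∧ (∀ i, ∃ n : ℤ, u.2 i = (n : ℝ)) ∧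
        MvPolynomial.aeval (Sum.elim xz.1 xz.2) f = MvPolynomial.aeval (Sum.elim u.1 u.2) f := by
    rintro ⟨x, zr⟩ hxP hz
    choose z hz using hz
    obtain rfl : zr = fun i => (z i : ℝ) := funext hz
    obtain ⟨V, hV⟩ := hslice z
    have hmem : ∀ y, y ∈ convexHull ℝ
        ((fun v : Fin d1 → ℤ => fun i => (v i : ℝ)) '' (V : Set (Fin d1 → ℤ))) →
        ((fun i => y i / Δ), fun i => (z i : ℝ)) ∈ P := by
      intro y hy
      rw [← hV] at hy
      obtain ⟨x', hx', rfl⟩ := hy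
      convert hx' using 2
      ext i; field_simp
    have hx : (fun i => (Δ : ℝ) * x i) ∈ convexHull ℝ
        ((fun v : Fin d1 → ℤ => fun i => (v i : ℝ)) '' (V : Set (Fin d1 → ℤ))) := by
      rw [← hV]; exact ⟨x, hxP, rfl⟩
    have hne : V.Nonempty := by
      by_contra hcon
      rw [Finset.not_nonempty_iff_eq_empty] at hcon
      subst hcon
      simp at hx
    obtain ⟨u0, hu0⟩ := hne
    set S := ((fun v : Fin d1 → ℤ => fun i => (v i : ℝ)) '' (V : Set (Fin d1 → ℤ))) with hS
    have hin : ∀ v ∈ V, (fun i => (v i : ℝ)) ∈ S := fun v hv => ⟨v, hv, rfl⟩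
    -- barycentric coordinates
    obtain ⟨w, hw⟩ : ∃ w : V → ℝ, ∀ j, (Δ : ℝ) * x j =
        u0 j + ∑ v : V, w v * ((v.1 j : ℝ) - u0 j) := by
      have himg : S = ((V.image (fun v : Fin d1 → ℤ => fun i => (v i : ℝ)) :
          Finset (Fin d1 → ℝ)) : Set (Fin d1 → ℝ)) := by
        rw [hS, Finset.coe_image]
      rw [himg, Finset.mem_convexHull'] at hx
      obtain ⟨w, -, hw1, hw2⟩ := hx
      have hinj : Function.Injective (fun v : Fin d1 → ℤ => fun i => (v i : ℝ)) := by
        intro a b hab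
        ext i
        exact Int.cast_injective (α := ℝ) (congrFun hab i)
      rw [Finset.sum_image hinj.injOn] at hw1 hw2
      refine ⟨fun v => w (fun i => (v.1 i : ℝ)), fun j => ?_⟩
      have h3 := congrFun hw2 j
      simp only [Finset.sum_apply, Pi.smul_apply, smul_eq_mul] at h3
      rw [Finset.sum_coe_sort V (fun v => w (fun i => (v i : ℝ)) * ((v j : ℝ) - u0 j))]
      simp only [mul_sub, Finset.sum_sub_distrib, ← Finset.sum_mul]
      rw [hw1, h3]; ring
    have hlat : ∀ a : V → ℕ, ∑ i, a i ≤ k →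
        (fun j => (u0 j : ℝ) + ∑ v : V, ((a v : ℝ) / k) * ((v.1 j : ℝ) - u0 j)) ∈
          convexHull ℝ S := by
      intro a ha
      have hsum : ∑ v : V, (a v : ℝ) / k ≤ 1 := by
        rw [← Finset.sum_div, div_le_one hk0']; exact_mod_cast ha
      have hc := (convex_convexHull ℝ S).sum_mem (t := (Finset.univ : Finset (Option V)))
        (w := fun o => o.elim (1 - ∑ v : V, (a v : ℝ) / k) (fun v => (a v : ℝ) / k))
        (z := fun o => o.elim (fun i => (u0 i : ℝ)) (fun v => fun i => (v.1 i : ℝ)))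
        (by rintro (_ | v) _
            · simpa using hsum
            · simp; positivity)
        (by simp [Fintype.sum_option])
        (by rintro (_ | v) _
            · exact subset_convexHull ℝ S (hin _ hu0)
            · exact subset_convexHull ℝ S (hin _ v.2))
      convert hc using 1
      ext j
      simp only [Fintype.sum_option, Option.elim, Pi.add_apply, Pi.smul_apply, Finset.sum_apply,
        smul_eq_mul, mul_sub, Finset.sum_sub_distrib, ← Finset.sum_mul]
      ring
    have hlat2 : ∀ a : V → ℕ, ∀ j, ∃ n : ℤ,
        ((u0 j : ℝ) + ∑ v : V, ((a v : ℝ) / k) * ((v.1 j : ℝ) - u0 j)) / Δ = (n : ℝ) / (m : ℝ) := by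
      intro a j
      refine ⟨k * u0 j + ∑ v : V, (a v : ℤ) * (v.1 j - u0 j), ?_⟩
      have : ∑ v : V, ((a v : ℝ) / k) * ((v.1 j : ℝ) - u0 j) =
          (∑ v : V, (a v : ℝ) * ((v.1 j : ℝ) - u0 j)) / k := by
        rw [Finset.sum_div]; exact Finset.sum_congr rfl fun _ _ => by ring
      rw [this, hm]
      push_cast
      field_simp
    have hu0P := hlat 0 (by simp)
    have hu0L := hlat2 0
    simp only [Pi.zero_apply, Nat.cast_zero, zero_div, zero_mul, Finset.sum_const_zero,
      add_zero] at hu0P hu0L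
    refine ⟨((fun j => (u0 j : ℝ) / Δ), fun i => (z i : ℝ)), hmem _ hu0P, hu0L,
      fun i => ⟨z i, rfl⟩, ?_⟩
    have fin := lattice_const f D k hdeg hDk
      (Sum.elim (fun j => (u0 j : ℝ) / Δ) (fun i => (z i : ℝ)))
      (fun v : V => Sum.elim (fun j => ((v.1 j : ℝ) - u0 j) / k / Δ) (fun _ => 0))
      (MvPolynomial.aeval (Sum.elim (fun j => (u0 j : ℝ) / Δ) (fun i => (z i : ℝ))) f)
      (by
        intro a ha
        have := h _ (hmem _ (hlat a ha)) (hlat2 a) (fun i => ⟨z i, rfl⟩) _ (hmem _ hu0P) hu0L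
          (fun i => ⟨z i, rfl⟩)
        rw [← this]
        congr 2
        ext (j | i)
        · simp only [Sum.elim_inl, add_div, Finset.sum_div]
          congr 1
          exact Finset.sum_congr rfl fun _ _ => by ring
        · simp)
      (fun v => k * w v)
    rw [← fin]
    congr 2
    ext (j | i)
    · simp only [Sum.elim_inl]
      have := hw j
      rw [← mul_right_inj' hΔ0, this, mul_add, Finset.mul_sum]
      congr 1
      · field_simp
      · exact Finset.sum_congr rfl fun _ _ => by field_simp
    · simp
  intro xz hxz hx2 yw hyw hy2
  obtain ⟨u, hu, hu1, hu2, hu3⟩ := main xz hxz hx2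
  obtain ⟨v, hv, hv1, hv2, hv3⟩ := main yw hyw hy2
  rw [hu3, hv3]
  exact h u hu hu1 hu2 v hv hv1 hv2
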